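/- Let X ∈ ℝ^d, Y ∈ ℝ^q with joint law P_{X,Y} having finite first moment, and let η be a random vector in ℝ^m independent of X. Suppose there exists at least one measurable G₀ : ℝ^m × ℝ^d → ℝ^q such that the law of (X, G₀(η, X)) equals P_{X,Y}. For a measurable G : ℝ^m × ℝ^d → ℝ^q such that (X, G(η, X)) has finite first moment, define W(G) = sup { E f(X, G(η, X)) − E f(X, Y) : f : ℝ^{d+q} → ℝ is 1-Lipschitz }. Then G* minimizes W over all such measurable G if and only if the law of (X, G*(η, X)) equals P_{X,Y}; and in that case, for P_X-almost every x, the law of G*(η, x) equals the conditional distribution P_{Y|X=x}. -/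

import Mathlib

open MeasureTheory ProbabilityTheory

/-- The Wasserstein-type objective `W(G) = sup_{f 1-Lipschitz} E f(X, G(η,X)) − E f(X,Y)`. -/
noncomputable def wassersteinObjective {d q m : ℕ} {Ω : Type*} [MeasurableSpace Ω]
    (P : Measure Ω) (X : Ω → Fin d → ℝ) (Y : Ω → Fin q → ℝ) (η : Ω → Fin m → ℝ)
    (G : (Fin m → ℝ) × (Fin d → ℝ) → Fin q → ℝ) : ℝ :=
  sSup {r : ℝ | ∃ f : (Fin d → ℝ) × (Fin q → ℝ) → ℝ, LipschitzWith 1 f ∧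
    r = (∫ ω, f (X ω, G (η ω, X ω)) ∂P) - ∫ ω, f (X ω, Y ω) ∂P}

lemma aux_int {Ω E : Type*} [MeasurableSpace Ω] [NormedAddCommGroup E] [MeasurableSpace E]
    [BorelSpace E] (P : Measure Ω) [IsProbabilityMeasure P] (Z : Ω → E) (hZ : Measurable Z)
    (h : Integrable (fun ω => ‖Z ω‖) P) (f : E → ℝ) (hf : LipschitzWith 1 f) :
    Integrable (fun ω => f (Z ω)) P := by
  refine Integrable.mono' (h.add (integrable_const |f 0|))
    (hf.continuous.measurable.comp hZ).aestronglyMeasurable (ae_of_all _ fun ω => ?_)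
  have := hf.dist_le_mul (Z ω) 0
  simp only [dist_zero_right, Real.dist_eq, NNReal.coe_one, one_mul] at this
  simp only [Pi.add_apply, Real.norm_eq_abs]
  have h2 := abs_sub_abs_le_abs_sub (f (Z ω)) (f 0)
  linarith

lemma aux_ext {Ω E : Type*} [MeasurableSpace Ω] [NormedAddCommGroup E] [MeasurableSpace E]
    [BorelSpace E] (P : Measure Ω) [IsProbabilityMeasure P] (Z Z' : Ω → E) (hZ : Measurable Z)
    (hZ' : Measurable Z')
    (h : ∀ f : E → ℝ, LipschitzWith 1 f → ∫ ω, f (Z ω) ∂P = ∫ ω, f (Z' ω) ∂P) :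
    P.map Z = P.map Z' := by
  have : IsProbabilityMeasure (P.map Z) := Measure.isProbabilityMeasure_map hZ.aemeasurable
  have : IsProbabilityMeasure (P.map Z') := Measure.isProbabilityMeasure_map hZ'.aemeasurable
  let μ : ProbabilityMeasure E := ⟨P.map Z, inferInstance⟩
  let ν : ProbabilityMeasure E := ⟨P.map Z', inferInstance⟩
  have key : Filter.Tendsto (fun _ : ℕ => μ) Filter.atTop (nhds ν) := by
    rw [tendsto_iff_forall_lipschitz_integral_tendsto]
    rintro f - ⟨L, hL⟩
    have hg : LipschitzWith 1 (fun x => ((L : ℝ) + 1)⁻¹ * f x) := by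
      refine LipschitzWith.of_dist_le_mul fun x y => ?_
      have h1 := hL.dist_le_mul x y
      rw [Real.dist_eq] at h1 ⊢
      rw [← mul_sub, abs_mul, abs_of_pos (by positivity), inv_mul_le_iff₀ (by positivity)]
      simp only [NNReal.coe_one, one_mul]
      nlinarith [dist_nonneg (x := x) (y := y)]
    have h2 := h _ hg
    rw [integral_const_mul, integral_const_mul] at h2
    have h3 := mul_left_cancel₀ (by positivity) h2
    have h4 : ∫ x, f x ∂(μ : Measure E) = ∫ x, f x ∂(ν : Measure E) := by
      change ∫ x, f x ∂(P.map Z) = ∫ x, f x ∂(P.map Z')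
      rw [integral_map hZ.aemeasurable hL.continuous.stronglyMeasurable.aestronglyMeasurable,
        integral_map hZ'.aemeasurable hL.continuous.stronglyMeasurable.aestronglyMeasurable, h3]
    simp only [h4]
    exact tendsto_const_nhds
  have h5 := tendsto_nhds_unique tendsto_const_nhds key
  exact congrArg (fun m : ProbabilityMeasure E => (m : Measure E)) h5

lemma aux_zero {d q m : ℕ} {Ω : Type*} [MeasurableSpace Ω]
    (P : Measure Ω) (X : Ω → Fin d → ℝ) (Y : Ω → Fin q → ℝ) (η : Ω → Fin m → ℝ)
    (hX : Measurable X) (hY : Measurable Y) (hη : Measurable η)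
    (G : (Fin m → ℝ) × (Fin d → ℝ) → Fin q → ℝ) (hG : Measurable G)
    (h : Measure.map (fun ω => (X ω, G (η ω, X ω))) P
      = Measure.map (fun ω => (X ω, Y ω)) P) : wassersteinObjective P X Y η G = 0 := by
  apply le_antisymm
  · apply Real.sSup_nonpos
    rintro r ⟨f, hf, rfl⟩
    have h1 : AEMeasurable (fun ω => (X ω, G (η ω, X ω))) P := by fun_prop
    have h2 : AEMeasurable (fun ω => (X ω, Y ω)) P := by fun_prop
    rw [← integral_map (f := f) h1 hf.continuous.measurable.aestronglyMeasurable,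
      ← integral_map (f := f) h2 hf.continuous.measurable.aestronglyMeasurable, h, sub_self]
  · exact Real.sSup_nonneg' ⟨0, ⟨fun _ => 0, LipschitzWith.const' 0, by simp⟩, le_rfl⟩

lemma aux_conv {d q m : ℕ} {Ω : Type*} [MeasurableSpace Ω]
    (P : Measure Ω) [IsProbabilityMeasure P]
    (X : Ω → Fin d → ℝ) (Y : Ω → Fin q → ℝ) (η : Ω → Fin m → ℝ)
    (hX : Measurable X) (hY : Measurable Y) (hη : Measurable η)
    (hmom : Integrable (fun ω => ‖(X ω, Y ω)‖) P)
    (G : (Fin m → ℝ) × (Fin d → ℝ) → Fin q → ℝ) (hG : Measurable G)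
    (hGmom : Integrable (fun ω => ‖(X ω, G (η ω, X ω))‖) P)
    (h : wassersteinObjective P X Y η G ≤ 0) :
    Measure.map (fun ω => (X ω, G (η ω, X ω))) P
      = Measure.map (fun ω => (X ω, Y ω)) P := by
  have h1 : Measurable (fun ω => (X ω, G (η ω, X ω))) := by fun_prop
  have h2 : Measurable (fun ω => (X ω, Y ω)) := by fun_prop
  have key : ∀ f : (Fin d → ℝ) × (Fin q → ℝ) → ℝ, LipschitzWith 1 f →
      (∫ ω, f (X ω, G (η ω, X ω)) ∂P) - ∫ ω, f (X ω, Y ω) ∂P ≤ 0 := by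
    intro f hf
    unfold wassersteinObjective at h
    refine le_trans (le_csSup (a := (∫ ω, f (X ω, G (η ω, X ω)) ∂P) - ∫ ω, f (X ω, Y ω) ∂P) ?_ ?_) h
    swap
    · exact ⟨f, hf, rfl⟩
    refine ⟨∫ ω, (‖(X ω, G (η ω, X ω))‖ + ‖(X ω, Y ω)‖) ∂P, ?_⟩
    rintro r ⟨g, hg, rfl⟩
    have i1 := aux_int P _ h1 hGmom g hg
    have i2 := aux_int P _ h2 hmom g hg
    rw [← integral_sub i1 i2]
    refine integral_mono (i1.sub i2) (hGmom.add hmom) fun ω => ?_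
    have h3 := hg.dist_le_mul (X ω, G (η ω, X ω)) (X ω, Y ω)
    rw [dist_eq_norm (E := (Fin d → ℝ) × (Fin q → ℝ)), NNReal.coe_one, one_mul, Real.dist_eq] at h3
    exact (le_abs_self _).trans (h3.trans (norm_sub_le _ _))
  refine aux_ext P _ _ h1 h2 fun f hf => ?_
  have k1 := key f hf
  have k2 := key (fun x => - f x) hf.neg
  rw [integral_neg, integral_neg] at k2
  linarith

/-- `G*` minimizes the dual 1-Wasserstein objective `W` over all measurable generators with
finite first moment if and only if the law of `(X, G*(η, X))` equals `P_{X,Y}`; and in that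
case, for `P_X`-almost every `x`, the law of `G*(η, x)` equals the conditional distribution
of `Y` given `X = x`. -/
theorem minimizer_iff_law_eq_and_conditional
    (d q m : ℕ)
    {Ω : Type*} [MeasurableSpace Ω] (P : Measure Ω) [IsProbabilityMeasure P]
    (X : Ω → Fin d → ℝ) (Y : Ω → Fin q → ℝ) (η : Ω → Fin m → ℝ)
    (hX : Measurable X) (hY : Measurable Y) (hη : Measurable η)
    (hmom : Integrable (fun ω => ‖(X ω, Y ω)‖) P)
    (hind : IndepFun η X P)
    (G₀ : (Fin m → ℝ) × (Fin d → ℝ) → Fin q → ℝ) (hG₀ : Measurable G₀)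
    (hG₀law : Measure.map (fun ω => (X ω, G₀ (η ω, X ω))) P
      = Measure.map (fun ω => (X ω, Y ω)) P)
    (Gs : (Fin m → ℝ) × (Fin d → ℝ) → Fin q → ℝ) (hGs : Measurable Gs)
    (hGsmom : Integrable (fun ω => ‖(X ω, Gs (η ω, X ω))‖) P) :
    ((∀ G : (Fin m → ℝ) × (Fin d → ℝ) → Fin q → ℝ, Measurable G →
        Integrable (fun ω => ‖(X ω, G (η ω, X ω))‖) P →
        wassersteinObjective P X Y η Gs ≤ wassersteinObjective P X Y η G)
      ↔ Measure.map (fun ω => (X ω, Gs (η ω, X ω))) P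
          = Measure.map (fun ω => (X ω, Y ω)) P)
    ∧ (Measure.map (fun ω => (X ω, Gs (η ω, X ω))) P
          = Measure.map (fun ω => (X ω, Y ω)) P →
        ∀ᵐ x ∂(Measure.map X P),
          Measure.map (fun ω => Gs (η ω, x)) P = condDistrib Y X P x) := by
  refine ⟨⟨fun h => ?_, fun h G hG hGmom => ?_⟩, fun h => ?_⟩
  · have h1 : Measurable (fun ω => (X ω, G₀ (η ω, X ω))) := by fun_prop
    have h2 : Measurable (fun ω => (X ω, Y ω)) := by fun_prop
    refine aux_conv P X Y η hX hY hη hmom Gs hGs hGsmom ?_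
    rw [← aux_zero P X Y η hX hY hη G₀ hG₀ hG₀law]
    refine h G₀ hG₀ ?_
    have e1 := integrable_map_measure (μ := P) (f := fun ω => (X ω, G₀ (η ω, X ω)))
      (g := fun z : (Fin d → ℝ) × (Fin q → ℝ) => ‖z‖)
      measurable_norm.aestronglyMeasurable h1.aemeasurable
    have e2 := integrable_map_measure (μ := P) (f := fun ω => (X ω, Y ω))
      (g := fun z : (Fin d → ℝ) × (Fin q → ℝ) => ‖z‖)
      measurable_norm.aestronglyMeasurable h2.aemeasurable
    rw [hG₀law] at e1
    exact e1.1 (e2.2 hmom)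
  · rw [aux_zero P X Y η hX hY hη Gs hGs h]
    exact Real.sSup_nonneg' ⟨0, ⟨fun _ => 0, LipschitzWith.const' 0, by simp⟩, le_rfl⟩
  · have : IsProbabilityMeasure (P.map η) := Measure.isProbabilityMeasure_map hη.aemeasurable
    have : IsProbabilityMeasure (P.map X) := Measure.isProbabilityMeasure_map hX.aemeasurable
    have hsw : Measurable (fun p : (Fin d → ℝ) × (Fin m → ℝ) => Gs (p.2, p.1)) := by fun_prop
    have hm : Measurable (fun x : Fin d → ℝ => (P.map η).map (fun e => Gs (e, x))) := by
      refine Measure.measurable_of_measurable_coe _ fun s hs => ?_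
      have : ∀ x : Fin d → ℝ, (P.map η).map (fun e => Gs (e, x)) s
          = (P.map η) (Prod.mk x ⁻¹' ((fun p : (Fin d → ℝ) × (Fin m → ℝ) => Gs (p.2, p.1)) ⁻¹' s)) :=
        fun x => Measure.map_apply (by fun_prop) hs
      simp only [this]
      exact measurable_measure_prodMk_left (hsw hs)
    let κ : Kernel (Fin d → ℝ) (Fin q → ℝ) := ⟨_, hm⟩
    have hκ : ∀ x, κ x = (P.map η).map (fun e => Gs (e, x)) := fun x => rfl
    have : IsMarkovKernel κ := ⟨fun x => by
      rw [hκ]; exact Measure.isProbabilityMeasure_map (by fun_prop)⟩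
    have hprod := (indepFun_iff_map_prod_eq_prod_map_map hX.aemeasurable hη.aemeasurable).1
      hind.symm
    have hlaw : P.map (fun ω => (X ω, Y ω)) = P.map X ⊗ₘ κ := by
      rw [← h]
      have hT : Measurable (fun p : (Fin d → ℝ) × (Fin m → ℝ) => (p.1, Gs (p.2, p.1))) := by
        fun_prop
      have : P.map (fun ω => (X ω, Gs (η ω, X ω)))
          = (P.map (fun ω => (X ω, η ω))).map (fun p => (p.1, Gs (p.2, p.1))) := by
        rw [Measure.map_map hT (by fun_prop)]; rfl
      rw [this, hprod]
      ext s hs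
      rw [Measure.map_apply hT hs, Measure.prod_apply (hT hs), Measure.compProd_apply hs]
      refine lintegral_congr fun x => ?_
      rw [hκ, Measure.map_apply (by fun_prop) (measurable_prodMk_left hs)]
      rfl
    filter_upwards [condDistrib_ae_eq_of_measure_eq_compProd X hY.aemeasurable hlaw] with x hx
    rw [hx, hκ, Measure.map_map (by fun_prop) hη]
    rfl
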